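/- arXiv:2108.01609 — 5 statements merged into one kernel-verified Lean document; each statement's English description precedes it below -/
import Mathlib

section
/- Let H be a real inner product space and P : H →ₗ[ℝ] H a symmetric linear operator. Then for all x, y ∈ H and all j, l ∈ ℕ, ⟪T_j(P) x, T_l(P) y⟫ = (1/2) · (⟪x, T_{j+l}(P) y⟫ + ⟪x, T_{|j−l|}(P) y⟫). (This is the data-driven mass matrix formula: the (j,l) block of the Gram matrix of the snapshots equals (1/2)(D_{j+l} + D_{|j−l|}), where D_k is the k-th data matrix.) -/
open Polynomial Polynomial.Chebyshev
open scoped RealInnerProductSpace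

theorem T_abs (R : Type*) [CommRing R] (n : ℤ) : T R |n| = T R n := by
  rw [← Int.natCast_natAbs, T_natAbs]

theorem two_mul_aeval_T_mul_aeval_T {R A : Type*} [CommRing R] [Ring A] [Algebra R A]
    (a : A) (m n : ℤ) :
    2 * aeval a (T R m) * aeval a (T R n) = aeval a (T R (m + n)) + aeval a (T R (m - n)) := by
  simpa only [map_mul, map_add, map_ofNat] using congrArg (aeval a) (T_mul_T R m n)

theorem isAdjointPair_aeval {R M N : Type*} [CommSemiring R] [AddCommMonoid M] [Module R M]
    [AddCommMonoid N] [Module R N] {B : M →ₗ[R] M →ₗ[R] N} {f g : Module.End R M}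
    (h : B.IsAdjointPair B f g) (p : R[X]) : B.IsAdjointPair B (aeval f p) (aeval g p) := by
  induction p using Polynomial.induction_on with
  | C a => intro x y; simp [Module.algebraMap_end_apply]
  | add p q hp hq =>
    rw [map_add, map_add]
    exact hp.add hq
  | monomial n a ih =>
    have hf : aeval f (Polynomial.C a * X ^ (n + 1)) = aeval f (Polynomial.C a * X ^ n) * f := by
      rw [pow_succ, ← mul_assoc, map_mul, aeval_X]
    have hg : aeval g (Polynomial.C a * X ^ (n + 1)) = g * aeval g (Polynomial.C a * X ^ n) := by
      rw [pow_succ', mul_left_comm, map_mul, aeval_X]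
    rw [hf, hg]
    exact ih.mul h

/-- `B` takes values in a module `N` so that, with `R = ℝ` and `N = ℂ`, the inner product of a
complex space is also covered. -/
theorem mass_matrix_formula_general {R M N : Type*} [CommRing R] [AddCommGroup M] [Module R M]
    [AddCommMonoid N] [Module R N] {B : M →ₗ[R] M →ₗ[R] N} {f g : Module.End R M}
    (h : B.IsAdjointPair B f g) (x y : M) (m n : ℤ) :
    2 • B (aeval f (T R m) x) (aeval g (T R n) y) =
      B x (aeval g (T R (m + n)) y) + B x (aeval g (T R |m - n|) y) :=
  calc
    2 • B (aeval f (T R m) x) (aeval g (T R n) y)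
      = 2 • B x (aeval g (T R m) (aeval g (T R n) y)) := by rw [isAdjointPair_aeval h]
    _ = B x ((2 * aeval g (T R m) * aeval g (T R n)) y) := by
      simp only [two_mul, add_mul, two_smul, LinearMap.add_apply, Module.End.mul_apply, map_add]
    _ = B x (aeval g (T R (m + n)) y) + B x (aeval g (T R |m - n|) y) := by
      rw [two_mul_aeval_T_mul_aeval_T, LinearMap.add_apply, map_add, T_abs]

/-- The data-driven mass matrix formula: for a symmetric operator `P` on a real inner
product space, `⟪T_j(P) x, T_l(P) y⟫ = (1/2)(⟪x, T_{j+l}(P) y⟫ + ⟪x, T_{|j-l|}(P) y⟫)`. -/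
theorem mass_matrix_formula {H : Type*} [NormedAddCommGroup H] [InnerProductSpace ℝ H]
    (P : H →ₗ[ℝ] H) (hsym : ∀ x y : H, ⟪P x, y⟫ = ⟪x, P y⟫)
    (x y : H) (j l : ℕ) :
    ⟪aeval (P : Module.End ℝ H) (T ℝ (j : ℤ)) x,
      aeval (P : Module.End ℝ H) (T ℝ (l : ℤ)) y⟫ =
    (1 / 2 : ℝ) * (⟪x, aeval (P : Module.End ℝ H) (T ℝ ((j : ℤ) + l)) y⟫ +
      ⟪x, aeval (P : Module.End ℝ H) (T ℝ (|(j : ℤ) - l|)) y⟫) := by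
  rw [one_div, eq_inv_mul_iff_mul_eq₀ two_ne_zero, two_mul, ← two_nsmul]
  exact mass_matrix_formula_general (B := innerₗ H) (f := P) (g := P) hsym x y j l
end

section
/- Let H be a real inner product space and P : H →ₗ[ℝ] H a symmetric linear operator. Then for all x, y ∈ H and all j, l ∈ ℕ, ⟪T_j(P) x, P (T_l(P) y)⟫ = (1/4) · (⟪x, T_{j+l+1}(P) y⟫ + ⟪x, T_{|j−l−1|}(P) y⟫ + ⟪x, T_{|j+l−1|}(P) y⟫ + ⟪x, T_{|j−l+1|}(P) y⟫). (This is the data-driven stiffness matrix formula: the (j,l) block of the stiffness matrix equals (1/4)(D_{j+l+1} + D_{|j−l−1|} + D_{|j+l−1|} + D_{|j−l+1|}).) -/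
open Polynomial Polynomial.Chebyshev
open scoped RealInnerProductSpace

/-!
Adjointness turns the left-hand side into `⟪x, (T_j X T_l)(P) y⟫`, so the formula is an identity of
polynomials. Multiplying by `4`, the recurrence `2 X T_l = T_{l+1} + T_{l-1}` followed by the two
products `2 T_j T_{l±1} = T_{j+(l±1)} + T_{j-(l±1)}` produces the four terms on the right.
-/

section Chebyshev

variable (R : Type*) [CommRing R]

theorem chebyshev_T_abs (n : ℤ) : T R |n| = T R n := by
  rw [← T_natAbs, Int.natAbs_abs, T_natAbs]

theorem four_mul_T_mul_X_mul_T (j l : ℤ) :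
    4 * (T R j * (X * T R l)) =
      T R (j + l + 1) + T R (j - l - 1) + T R (j + l - 1) + T R (j - l + 1) :=
  calc
    4 * (T R j * (X * T R l)) = 2 * T R j * T R (l + 1) + 2 * T R j * T R (l - 1) := by
      rw [T_add_one]
      ring
    _ = T R (j + l + 1) + T R (j - l - 1) + T R (j + l - 1) + T R (j - l + 1) := by
      rw [T_mul_T, T_mul_T, ← add_assoc, ← sub_sub, ← add_sub_assoc, ← sub_add, ← add_assoc]

end Chebyshev

section AdjointPair

variable {R M N : Type*} [CommSemiring R] [AddCommMonoid M] [AddCommMonoid N]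
  [Module R M] [Module R N] {I : R →+* R} {B : M →ₗ[R] M →ₛₗ[I] N} {f g : Module.End R M}

theorem isAdjointPair_pow (h : B.IsAdjointPair B f g) (n : ℕ) :
    B.IsAdjointPair B ⇑(f ^ n) ⇑(g ^ n) := by
  induction n with
  | zero => exact LinearMap.isAdjointPair_one
  | succ n ih =>
    rw [pow_succ f, pow_succ' g]
    exact ih.mul h

theorem isAdjointPair_aeval_map (h : B.IsAdjointPair B f g) (p : R[X]) :
    B.IsAdjointPair B (aeval f (p.map I)) (aeval g p) := by
  induction p using Polynomial.induction_on' with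
  | add p q hp hq =>
    rw [Polynomial.map_add, map_add, map_add]
    exact hp.add hq
  | monomial n a =>
    intro x y
    simp only [map_monomial, aeval_monomial, Module.End.mul_apply, Module.algebraMap_end_apply,
      map_smul, LinearMap.smul_apply, LinearMap.map_smulₛₗ, isAdjointPair_pow h n x y]

end AdjointPair

theorem stiffness_matrix_formula_general {R M N : Type*} [CommRing R] [AddCommMonoid M]
    [AddCommMonoid N] [Module R M] [Module R N] {I : R →+* R} {B : M →ₗ[R] M →ₛₗ[I] N}
    {f g : Module.End R M} (h : B.IsAdjointPair B f g) (x y : M) (j l : ℤ) :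
    4 • B (aeval f (T R j) x) (g (aeval g (T R l) y)) =
      B x (aeval g (T R (j + l + 1)) y) + B x (aeval g (T R (j - l - 1)) y) +
      B x (aeval g (T R (j + l - 1)) y) + B x (aeval g (T R (j - l + 1)) y) := by
  have h_adjoint : B (aeval f (T R j) x) (g (aeval g (T R l) y)) =
      B x (aeval g (T R j * (X * T R l)) y) := by
    simpa only [map_T, map_mul, aeval_X, Module.End.mul_apply] using
      isAdjointPair_aeval_map h (T R j) x (g (aeval g (T R l) y))
  calc
    4 • B (aeval f (T R j) x) (g (aeval g (T R l) y))
    _ = B x (aeval g (4 * (T R j * (X * T R l))) y) := by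
      rw [h_adjoint, map_mul (aeval g) 4, map_ofNat (aeval g), Module.End.mul_apply,
        Module.End.ofNat_apply, map_nsmul]
    _ = _ := by
      simp only [four_mul_T_mul_X_mul_T, map_add, LinearMap.add_apply]

/-- The data-driven stiffness matrix formula: for a symmetric operator `P` on a real inner
product space, `⟪T_j(P) x, P (T_l(P) y)⟫ = (1/4)(⟪x, T_{j+l+1}(P) y⟫ + ⟪x, T_{|j-l-1|}(P) y⟫
+ ⟪x, T_{|j+l-1|}(P) y⟫ + ⟪x, T_{|j-l+1|}(P) y⟫)`. -/
theorem stiffness_matrix_formula {H : Type*} [NormedAddCommGroup H] [InnerProductSpace ℝ H]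
    (P : H →ₗ[ℝ] H) (hsym : ∀ x y : H, ⟪P x, y⟫ = ⟪x, P y⟫)
    (x y : H) (j l : ℕ) :
    ⟪aeval (P : Module.End ℝ H) (T ℝ (j : ℤ)) x,
      P (aeval (P : Module.End ℝ H) (T ℝ (l : ℤ)) y)⟫ =
    (1 / 4 : ℝ) *
      (⟪x, aeval (P : Module.End ℝ H) (T ℝ ((j : ℤ) + l + 1)) y⟫ +
       ⟪x, aeval (P : Module.End ℝ H) (T ℝ (|(j : ℤ) - l - 1|)) y⟫ +
       ⟪x, aeval (P : Module.End ℝ H) (T ℝ (|(j : ℤ) + l - 1|)) y⟫ +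
       ⟪x, aeval (P : Module.End ℝ H) (T ℝ (|(j : ℤ) - l + 1|)) y⟫) := by
  simp only [chebyshev_T_abs, ← innerₗ_apply_apply]
  linear_combination (1 / 4 : ℝ) * stiffness_matrix_formula_general (B := innerₗ H) hsym x y j l
end

section
/- (Proposition 1, algebraic form.) Let H be a real inner product space, P : H →ₗ[ℝ] H a symmetric linear operator, m, n ∈ ℕ, and b : Fin m → H. Set K := Fin n × Fin m and define the snapshots u_{(l,s)} := T_l(P) (b s). Let M : Matrix K K ℝ be the Gram matrix M_{(j,r),(l,s)} = ⟪u_{(j,r)}, u_{(l,s)}⟫, let R : Matrix K K ℝ be invertible with M = Rᵀ * R, and set v_k := ∑_{l ∈ K} (R⁻¹)_{l,k} • u_l. Then for every coefficient vector c : K → ℝ, every j ∈ Fin n and every r ∈ Fin m, ⟪b r, T_j(P) (∑_{k ∈ K} c_k • v_k)⟫ = ∑_{k ∈ K} c_k · R_{k,(j,r)}. (With c equal to the vector of point values of the reference orthonormalized snapshots at an imaging point y, the left side is the internal wave g(jτ, x_r; y) emanating from the ROM point spread function at y, and the identity reads g(t_j, x_·; y) = V_o(y) R e_j.) -/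
open Matrix Polynomial Polynomial.Chebyshev
open scoped RealInnerProductSpace

/-!
For symmetric `P` the adjoint of `p(P)` is `p̄(P)`, where `p̄` has the conjugate coefficients; real
polynomials such as `T_j` are their own conjugates. Moving `T_j(P)` across the inner product turns
`b r` into the snapshot `u (j, r)`, so only the inner products of `u` with `v` matter. Their matrix
is `M * R⁻¹ = (Rᵀ * R) * R⁻¹ = Rᵀ`, whose `((j, r), k)` entry is `R k (j, r)`.
-/

open scoped InnerProductSpace ComplexConjugate

section

variable {𝕜 H : Type*} [RCLike 𝕜] [SeminormedAddCommGroup H] [InnerProductSpace 𝕜 H]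

theorem inner_aeval_map_conj_left {P : Module.End 𝕜 H} (hP : P.IsSymmetric) (p : 𝕜[X]) (x y : H) :
    ⟪aeval P (p.map (starRingEnd 𝕜)) x, y⟫_𝕜 = ⟪x, aeval P p y⟫_𝕜 := by
  induction p using Polynomial.induction_on' with
  | add p q hp hq =>
    simp only [Polynomial.map_add, map_add, LinearMap.add_apply, inner_add_left, inner_add_right,
      hp, hq]
  | monomial k a =>
    simp only [map_monomial, aeval_monomial, Module.End.mul_apply, Module.algebraMap_end_apply,
      inner_smul_left, inner_smul_right, RCLike.conj_conj, hP.pow k x y]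

theorem inner_sum_smul_eq_gram_mul {κ ρ : Type*} [Fintype κ] (u : κ → H) (S : Matrix κ ρ 𝕜)
    (i : κ) (k : ρ) : ⟪u i, ∑ l, S l k • u l⟫_𝕜 = (gram 𝕜 u * S) i k := by
  simp only [inner_sum, inner_smul_right, mul_apply, gram_apply, mul_comm]

theorem inner_sum_smul_of_gram_eq_conjTranspose_mul {κ ρ : Type*} [Fintype κ] [Fintype ρ]
    [DecidableEq ρ] {u : κ → H} {R : Matrix ρ κ 𝕜} {S : Matrix κ ρ 𝕜}
    (hgram : gram 𝕜 u = Rᴴ * R) (hRS : R * S = 1) (i : κ) (k : ρ) :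
    ⟪u i, ∑ l, S l k • u l⟫_𝕜 = conj (R k i) := by
  rw [inner_sum_smul_eq_gram_mul, hgram, Matrix.mul_assoc, hRS, Matrix.mul_one,
    conjTranspose_apply, RCLike.star_def]

theorem internal_wave_formula_general {κ ρ : Type*} [Fintype κ] [Fintype ρ] [DecidableEq ρ]
    {P : Module.End 𝕜 H} (hP : P.IsSymmetric) {p : 𝕜[X]} {w : H} {u : κ → H} {i : κ}
    (hu : u i = aeval P (p.map (starRingEnd 𝕜)) w)
    {R : Matrix ρ κ 𝕜} {S : Matrix κ ρ 𝕜} (hgram : gram 𝕜 u = Rᴴ * R) (hRS : R * S = 1)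
    (c : ρ → 𝕜) :
    ⟪w, aeval P p (∑ k, c k • ∑ l, S l k • u l)⟫_𝕜 = ∑ k, c k * conj (R k i) := by
  rw [← inner_aeval_map_conj_left hP, ← hu]
  simp only [inner_sum, inner_smul_right,
    inner_sum_smul_of_gram_eq_conjTranspose_mul hgram hRS]

end

/-- Proposition 1 (algebraic form): the internal wave evaluated at the sensors is given by
`⟪b r, T_j(P)(∑_k c_k • v_k)⟫ = ∑_k c_k · R_{k,(j,r)}`, i.e. `g(t_j, x_·; y) = V_o(y) R e_j`. -/
theorem internal_wave_formula {H : Type*} [NormedAddCommGroup H] [InnerProductSpace ℝ H]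
    (P : H →ₗ[ℝ] H) (hsym : ∀ x y : H, ⟪P x, y⟫ = ⟪x, P y⟫)
    (m n : ℕ) (b : Fin m → H)
    (u : Fin n × Fin m → H)
    (hu : ∀ (l : Fin n) (s : Fin m), u (l, s) = aeval (P : Module.End ℝ H) (T ℝ (l : ℤ)) (b s))
    (M R : Matrix (Fin n × Fin m) (Fin n × Fin m) ℝ)
    (hM : ∀ k k', M k k' = ⟪u k, u k'⟫)
    (hR : IsUnit R) (hfact : M = Rᵀ * R)
    (v : Fin n × Fin m → H) (hv : ∀ k, v k = ∑ l, R⁻¹ l k • u l)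
    (c : Fin n × Fin m → ℝ) (j : Fin n) (r : Fin m) :
    ⟪b r, aeval (P : Module.End ℝ H) (T ℝ (j : ℤ)) (∑ k, c k • v k)⟫ =
      ∑ k, c k * R k (j, r) := by
  have hgram : gram ℝ u = Rᴴ * R := by
    rw [conjTranspose_eq_transpose_of_trivial, ← hfact]
    exact (Matrix.ext hM).symm
  have hRinv : R * R⁻¹ = 1 := mul_nonsing_inv R ((isUnit_iff_isUnit_det R).mp hR)
  have hujr : u (j, r) = aeval P ((T ℝ (j : ℤ)).map (starRingEnd ℝ)) (b r) := by
    rw [map_T, hu]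
  simpa only [hv, conj_trivial] using internal_wave_formula_general hsym hujr hgram hRinv c
end

section
/- Under the hypotheses of Proposition 1 (H a real inner product space, P : H →ₗ[ℝ] H symmetric, snapshots u_{(l,s)} := T_l(P)(b s) for (l,s) ∈ K = Fin n × Fin m, Gram matrix M, invertible R with M = Rᵀ * R, and v_k := ∑_l (R⁻¹)_{l,k} • u_l), for every c : K → ℝ the imaging function satisfies ∑_{j ∈ Fin n} ∑_{r ∈ Fin m} ⟪b r, T_j(P) (∑_{k ∈ K} c_k • v_k)⟫² = ∑_{k ∈ K} ∑_{k' ∈ K} c_k · (R * Rᵀ)_{k,k'} · c_{k'}. (The imaging function I(y), the squared norm over all sensors and sampling times of the internal wave, is computable from the Cholesky factor R of the data-driven mass matrix alone, without inverting R.) -/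
open Matrix Polynomial Polynomial.Chebyshev
open scoped RealInnerProductSpace

/-!
Moving the symmetric operator `T_j(P)` onto the sensor turns `⟪b_r, T_j(P) x⟫` into
`⟪u_{(j,r)}, x⟫`. If the Gram matrix of `u` is `Rᴴ R`, then the inner products of `u` with the
vectors `v_k = ∑_l (R⁻¹)_{l,k} u_l` form the matrix `Rᴴ R R⁻¹ = Rᴴ`, so `x = ∑_k c_k v_k` has inner
products `Rᴴ c` with the snapshots, and the imaging function is `‖Rᴴ c‖² = cᴴ R Rᴴ c`.
-/

section

open scoped InnerProductSpace

variable {𝕜 E ι κ : Type*} [RCLike 𝕜]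

theorem sum_norm_sq_conjTranspose_mulVec [Fintype ι] [Fintype κ] (A : Matrix κ ι 𝕜) (c : κ → 𝕜) :
    ((∑ i, ‖(Aᴴ *ᵥ c) i‖ ^ 2 : ℝ) : 𝕜) = star c ⬝ᵥ (A * Aᴴ) *ᵥ c := by
  calc ((∑ i, ‖(Aᴴ *ᵥ c) i‖ ^ 2 : ℝ) : 𝕜)
      = star (Aᴴ *ᵥ c) ⬝ᵥ (Aᴴ *ᵥ c) := by
        simp only [dotProduct, Pi.star_apply, RCLike.star_def, RCLike.conj_mul, RCLike.ofReal_sum,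
          RCLike.ofReal_pow]
    _ = star c ⬝ᵥ (A * Aᴴ) *ᵥ c := by
        rw [star_mulVec, conjTranspose_conjTranspose, ← dotProduct_mulVec, mulVec_mulVec]

variable [SeminormedAddCommGroup E] [InnerProductSpace 𝕜 E]

theorem isSymmetric_aeval {A : E →ₗ[𝕜] E} (hA : A.IsSymmetric) {p : 𝕜[X]}
    (hp : ∀ i, star (p.coeff i) = p.coeff i) :
    (aeval (A : Module.End 𝕜 E) p : E →ₗ[𝕜] E).IsSymmetric := by
  rw [aeval_eq_sum_range]
  exact LinearMap.isSymmetric_sum _ fun i _ ↦ (hA.pow i).smul (hp i)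

theorem inner_sum_smul_eq_gram_mulVec [Fintype ι] (u : ι → E) (x : ι → 𝕜) (i : ι) :
    ⟪u i, ∑ l, x l • u l⟫_𝕜 = (gram 𝕜 u *ᵥ x) i := by
  simp only [inner_sum, inner_smul_right, mulVec, dotProduct, gram_apply, mul_comm]

theorem inner_sum_smul_eq_conjTranspose_of_gram_eq [Fintype ι] [Fintype κ]
    [DecidableEq κ] {u : ι → E} {R : Matrix κ ι 𝕜} {S : Matrix ι κ 𝕜}
    (hu : gram 𝕜 u = Rᴴ * R) (hRS : R * S = 1) (i : ι) (k : κ) :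
    ⟪u i, ∑ l, S l k • u l⟫_𝕜 = Rᴴ i k := by
  have gram_mul_S : gram 𝕜 u * S = Rᴴ := by
    rw [hu, Matrix.mul_assoc, hRS, Matrix.mul_one]
  rw [inner_sum_smul_eq_gram_mulVec, ← gram_mul_S, Matrix.mul_apply, mulVec, dotProduct]

/-- Rectangular factors `R` with a right inverse `S` also cover linearly dependent snapshots, whose
Gram matrix is singular. -/
theorem imaging_function_formula_general {σ : Type*} [Fintype ι] [Fintype σ] [Fintype κ]
    [DecidableEq κ] {A : ι → E →ₗ[𝕜] E} (hA : ∀ j, (A j).IsSymmetric) {b : σ → E}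
    {u : ι × σ → E} (hu : ∀ j r, u (j, r) = A j (b r))
    {R : Matrix κ (ι × σ) 𝕜} {S : Matrix (ι × σ) κ 𝕜}
    (hgram : gram 𝕜 u = Rᴴ * R) (hRS : R * S = 1)
    {v : κ → E} (hv : ∀ k, v k = ∑ l, S l k • u l) (c : κ → 𝕜) :
    ((∑ j, ∑ r, ‖⟪b r, A j (∑ k, c k • v k)⟫_𝕜‖ ^ 2 : ℝ) : 𝕜) =
      star c ⬝ᵥ (R * Rᴴ) *ᵥ c := by
  have internal_wave (j : ι) (r : σ) :
      ⟪b r, A j (∑ k, c k • v k)⟫_𝕜 = (Rᴴ *ᵥ c) (j, r) := by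
    rw [← hA j, ← hu, inner_sum]
    simp only [inner_smul_right, hv, inner_sum_smul_eq_conjTranspose_of_gram_eq hgram hRS, mulVec,
      dotProduct, mul_comm]
  simp only [internal_wave]
  rw [← Fintype.sum_prod_type' (f := fun j r ↦ ‖(Rᴴ *ᵥ c) (j, r)‖ ^ 2),
    sum_norm_sq_conjTranspose_mulVec]

end

/-- The imaging function, the squared norm over all sensors and sampling times of the
internal wave, is computable from the Cholesky factor `R` of the data-driven mass matrix
alone: `∑_j ∑_r ⟪b_r, T_j(P)(∑_k c_k v_k)⟫² = ∑_k ∑_{k'} c_k (R Rᵀ)_{k,k'} c_{k'}`. -/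
theorem imaging_function_formula {H : Type*} [NormedAddCommGroup H] [InnerProductSpace ℝ H]
    (P : H →ₗ[ℝ] H) (hsym : ∀ x y : H, ⟪P x, y⟫ = ⟪x, P y⟫)
    (m n : ℕ) (b : Fin m → H)
    (u : Fin n × Fin m → H)
    (hu : ∀ (l : Fin n) (s : Fin m), u (l, s) = aeval (P : Module.End ℝ H) (T ℝ (l : ℤ)) (b s))
    (M R : Matrix (Fin n × Fin m) (Fin n × Fin m) ℝ)
    (hM : ∀ k k', M k k' = ⟪u k, u k'⟫)
    (hR : IsUnit R) (hfact : M = Rᵀ * R)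
    (v : Fin n × Fin m → H) (hv : ∀ k, v k = ∑ l, R⁻¹ l k • u l)
    (c : Fin n × Fin m → ℝ) :
    ∑ j : Fin n, ∑ r : Fin m,
        ⟪b r, aeval (P : Module.End ℝ H) (T ℝ (j : ℤ)) (∑ k, c k • v k)⟫ ^ 2 =
      ∑ k, ∑ k', c k * (R * Rᵀ) k k' * c k' := by
  have hgram : gram ℝ u = Rᴴ * R := by
    rw [conjTranspose_eq_transpose_of_trivial, ← hfact]
    exact (Matrix.ext hM).symm
  have hinv : R * R⁻¹ = 1 := mul_nonsing_inv R ((isUnit_iff_isUnit_det R).1 hR)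
  have hT (j : Fin n) :
      (aeval (P : Module.End ℝ H) (T ℝ (j : ℤ)) : H →ₗ[ℝ] H).IsSymmetric :=
    isSymmetric_aeval hsym fun _ ↦ star_trivial _
  simpa [dotProduct, mulVec, Finset.mul_sum, mul_assoc] using
    imaging_function_formula_general hT hu hgram hinv hv c
end

section
/- Let 𝔸 be a complete normed real algebra with unit and a ∈ 𝔸, and define C : ℝ → 𝔸 by C(t) := ∑'_{n ∈ ℕ} ((−1)^n · t^(2n) / (2n)!) • a^n. Then for every k ∈ ℕ and every t ∈ ℝ, C(k · t) = (Polynomial.Chebyshev.T ℝ k).aeval (C(t)), i.e. the propagation over k time steps is the k-th Chebyshev polynomial of the first kind evaluated at the one-step propagator C(t). (This is the operator analogue of cos(kθ) = T_k(cos θ); it expresses the wave snapshots u_k = cos(kτ√A) b as Chebyshev polynomials of the propagator P = cos(τ√A) applied to the initial state.) -/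
open Polynomial Polynomial.Chebyshev

/-!
In the Cauchy product of the series for `C s` and `C t`, the coefficient of `a ^ n` collects the
terms of the binomial expansion of `(s ± t) ^ (2 * n)` that are even in `t`. This gives
d'Alembert's functional equation `C (s + t) + C (s - t) = 2 * (C s * C t)`. With `s = (n + 1) * t`
the equation becomes the recursion of the Chebyshev polynomials, evaluated at `C t`.
-/

section BinomialSums

open Finset hiding antidiagonal mem_antidiagonal
open Finset.HasAntidiagonal

theorem add_pow_add_sub_pow_two_mul {R : Type*} [CommRing R] (x y : R) (n : ℕ) :
    (x + y) ^ (2 * n) + (x - y) ^ (2 * n) =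
      2 * ∑ p ∈ antidiagonal n, (2 * n).choose (2 * p.1) * (x ^ (2 * p.1) * y ^ (2 * p.2)) := by
  let f (p : ℕ × ℕ) : R := (2 * n).choose p.1 * (x ^ p.1 * (y ^ p.2 + (-y) ^ p.2))
  have expand : (x + y) ^ (2 * n) + (x - y) ^ (2 * n) = ∑ p ∈ antidiagonal (2 * n), f p := by
    rw [sub_eq_add_neg, (Commute.all x y).add_pow', (Commute.all x (-y)).add_pow',
      ← sum_add_distrib]
    exact sum_congr rfl fun p _ => by simp only [f, nsmul_eq_mul]; ring
  have odd_terms_cancel : ∀ p ∈ antidiagonal (2 * n),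
      p ∉ (fun q : ℕ × ℕ => (2 * q.1, 2 * q.2)) '' antidiagonal n → f p = 0 := by
    intro p hp hp_image
    have sum_eq : p.1 + p.2 = 2 * n := mem_antidiagonal.1 hp
    have odd_snd : Odd p.2 := by
      refine Nat.not_even_iff_odd.1 fun ⟨j, hj⟩ => hp_image ⟨(n - j, j), ?_, ?_⟩
      · simp only [mem_coe, mem_antidiagonal]; lia
      · ext <;> lia
    simp only [f, odd_snd.neg_pow, add_neg_cancel, mul_zero]
  rw [expand, mul_sum]
  refine (sum_of_injOn (fun q => (2 * q.1, 2 * q.2)) ?_ ?_ odd_terms_cancel fun q _ => ?_).symm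
  · rintro ⟨i, j⟩ _ ⟨k, l⟩ _ h
    simp only [Prod.mk.injEq] at h ⊢
    lia
  · rintro ⟨i, j⟩ h
    simp only [mem_coe, mem_antidiagonal] at h ⊢
    lia
  · simp only [f, (even_two_mul q.2).neg_pow]
    ring

/-- The coefficient of `a ^ n` in the power series `cos (t √a)`, over any field of scalars so that
the addition theorem can be checked coefficientwise. -/
def cosSqrtCoeff {K : Type*} [Field K] (t : K) (n : ℕ) : K :=
  (-1) ^ n * t ^ (2 * n) / (2 * n).factorial

theorem cosSqrtCoeff_add_add_cosSqrtCoeff_sub {K : Type*} [Field K] [CharZero K] (s t : K)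
    (n : ℕ) :
    cosSqrtCoeff (s + t) n + cosSqrtCoeff (s - t) n =
      2 * ∑ p ∈ antidiagonal n, cosSqrtCoeff s p.1 * cosSqrtCoeff t p.2 := by
  have factorial_ne_zero (m : ℕ) : (m.factorial : K) ≠ 0 := mod_cast m.factorial_ne_zero
  calc cosSqrtCoeff (s + t) n + cosSqrtCoeff (s - t) n
      = (-1) ^ n * ((s + t) ^ (2 * n) + (s - t) ^ (2 * n)) / (2 * n).factorial := by
        simp only [cosSqrtCoeff]; ring
    _ = 2 * ∑ p ∈ antidiagonal n, (-1) ^ n *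
          ((2 * n).choose (2 * p.1) * (s ^ (2 * p.1) * t ^ (2 * p.2))) / (2 * n).factorial := by
        rw [add_pow_add_sub_pow_two_mul, mul_left_comm, mul_div_assoc, mul_sum, sum_div]
    _ = 2 * ∑ p ∈ antidiagonal n, cosSqrtCoeff s p.1 * cosSqrtCoeff t p.2 := by
        congr 1
        refine sum_congr rfl fun p hp => ?_
        obtain rfl : p.1 + p.2 = n := mem_antidiagonal.1 hp
        rw [mul_add, Nat.cast_add_choose, ← mul_add, cosSqrtCoeff, cosSqrtCoeff]
        field_simp [factorial_ne_zero]
        ring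

end BinomialSums

/-- A cosine family: a normalised solution of d'Alembert's functional equation on a group, with
values in a possibly noncommutative ring. It abstracts the addition theorem of the cosine, the
only property of `cos (t √a)` that the Chebyshev recursion uses. -/
structure IsCosineFamily {G A : Type*} [AddGroup G] [Ring A] (C : G → A) : Prop where
  map_zero : C 0 = 1
  map_add_add_map_sub : ∀ s t, C (s + t) + C (s - t) = 2 * (C s * C t)

namespace IsCosineFamily

variable {G A : Type*} [AddGroup G] [Ring A] {C : G → A}

theorem map_neg (hC : IsCosineFamily C) (t : G) : C (-t) = C t := by
  have h := hC.map_add_add_map_sub 0 t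
  rwa [zero_add, zero_sub, hC.map_zero, one_mul, two_mul, add_right_inj] at h

theorem map_zsmul (R : Type*) [CommRing R] [Algebra R A] (hC : IsCosineFamily C) (k : ℤ) (t : G) :
    C (k • t) = aeval (C t) (T R k) := by
  induction k using Chebyshev.induct' with
  | zero => rw [zero_zsmul, hC.map_zero, T_zero, map_one]
  | one => rw [one_zsmul, T_one, aeval_X]
  | neg k ih => rw [neg_zsmul, hC.map_neg, ih, T_neg]
  | add_two n ih_succ ih =>
    have recursion := hC.map_add_add_map_sub (((n : ℤ) + 1) • t) t
    rw [sub_eq_add_neg, ← add_one_zsmul, ← sub_one_zsmul, add_sub_cancel_right, add_assoc,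
      one_add_one_eq_two, ih, ih_succ] at recursion
    calc C (((n : ℤ) + 2) • t)
        = 2 * (aeval (C t) (T R (n + 1)) * C t) - aeval (C t) (T R n) := eq_sub_of_add_eq recursion
      _ = aeval (C t) (2 * (T R (n + 1) * X) - T R n) := by
        simp only [map_sub, map_mul, map_ofNat, aeval_X]
      _ = aeval (C t) (T R (n + 2)) := by rw [T_add_two, mul_comm (T R _) X, mul_assoc]

end IsCosineFamily

section WavePropagator

open Finset.HasAntidiagonal

variable {𝕂 𝔸 : Type*} [NontriviallyNormedField 𝕂] [NormedRing 𝔸] [NormedAlgebra 𝕂 𝔸]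

/-- The wave propagator `cos (t √a)`, written as a power series in `a` so that no square root of
`a` is needed. -/
noncomputable def wavePropagator (a : 𝔸) (t : 𝕂) : 𝔸 :=
  ∑' n : ℕ, cosSqrtCoeff t n • a ^ n

theorem wavePropagator_zero (a : 𝔸) : wavePropagator a (0 : 𝕂) = 1 := by
  rw [wavePropagator, tsum_eq_single 0 fun n hn => by simp [cosSqrtCoeff, hn]]
  simp [cosSqrtCoeff]

variable [CharZero 𝕂] [ContinuousSMul ℚ 𝕂]

theorem summable_norm_cosSqrtCoeff_smul_pow (a : 𝔸) (t : 𝕂) :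
    Summable fun n : ℕ => ‖cosSqrtCoeff t n • a ^ n‖ := by
  -- With `‖a‖ ≤ ‖c‖ ^ 2` the series is dominated by the even part of the series `exp (t * c)`.
  obtain ⟨c, hc⟩ := NormedField.exists_lt_norm 𝕂 √‖a‖
  have norm_le_sq : ‖a‖ ≤ ‖c‖ ^ 2 := (Real.sqrt_le_left (norm_nonneg c)).1 hc.le
  have summable_even_exp_terms :
      Summable fun n : ℕ => ‖((2 * n).factorial⁻¹ : 𝕂) • (t * c) ^ (2 * n)‖ :=
    (NormedSpace.norm_expSeries_summable' (t * c)).comp_injective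
      (mul_right_injective₀ two_ne_zero)
  refine summable_even_exp_terms.of_norm_bounded_eventually_nat ?_
  filter_upwards [Filter.eventually_gt_atTop 0] with n hn
  calc ‖‖cosSqrtCoeff t n • a ^ n‖‖
      = ‖t‖ ^ (2 * n) / ‖((2 * n).factorial : 𝕂)‖ * ‖a ^ n‖ := by
        simp [cosSqrtCoeff, norm_smul]
    _ ≤ ‖t‖ ^ (2 * n) / ‖((2 * n).factorial : 𝕂)‖ * (‖c‖ ^ 2) ^ n := by
        gcongr
        exact (norm_pow_le' a hn).trans (by gcongr)
    _ = ‖((2 * n).factorial⁻¹ : 𝕂) • (t * c) ^ (2 * n)‖ := by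
        rw [norm_smul, norm_inv, norm_pow, norm_mul]
        ring

variable [CompleteSpace 𝔸]

theorem wavePropagator_add_add_wavePropagator_sub (a : 𝔸) (s t : 𝕂) :
    wavePropagator a (s + t) + wavePropagator a (s - t) =
      2 * (wavePropagator a s * wavePropagator a t) := by
  have summable_norm := summable_norm_cosSqrtCoeff_smul_pow (𝕂 := 𝕂) a
  have cauchy_coeff (n : ℕ) :
      ∑ p ∈ antidiagonal n, (cosSqrtCoeff s p.1 • a ^ p.1) * (cosSqrtCoeff t p.2 • a ^ p.2) =
        (∑ p ∈ antidiagonal n, cosSqrtCoeff s p.1 * cosSqrtCoeff t p.2) • a ^ n := by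
    rw [Finset.sum_smul]
    refine Finset.sum_congr rfl fun p hp => ?_
    rw [smul_mul_smul_comm, ← pow_add, mem_antidiagonal.1 hp]
  have summable_product := (summable_norm_sum_mul_antidiagonal_of_summable_norm
    (summable_norm s) (summable_norm t)).of_norm
  simp only [wavePropagator]
  rw [← (summable_norm (s + t)).of_norm.tsum_add (summable_norm (s - t)).of_norm,
    tsum_mul_tsum_eq_tsum_sum_antidiagonal_of_summable_norm (summable_norm s) (summable_norm t),
    ← summable_product.tsum_mul_left]
  refine tsum_congr fun n => ?_
  rw [cauchy_coeff, ← add_smul, cosSqrtCoeff_add_add_cosSqrtCoeff_sub, two_mul, two_mul, add_smul]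

theorem isCosineFamily_wavePropagator (a : 𝔸) :
    IsCosineFamily (wavePropagator a : 𝕂 → 𝔸) where
  map_zero := wavePropagator_zero a
  map_add_add_map_sub := wavePropagator_add_add_wavePropagator_sub a

theorem operator_cos_nat_mul_eq_chebyshev_general (a : 𝔸) (k : ℤ) (t : 𝕂) :
    wavePropagator a (k * t) = aeval (wavePropagator a t) (T 𝕂 k) := by
  rw [← zsmul_eq_mul, (isCosineFamily_wavePropagator a).map_zsmul 𝕂]

end WavePropagator

/-- Operator analogue of `cos (kθ) = T_k (cos θ)`: with
`C t = ∑' n, ((-1)^n t^(2n)/(2n)!) • a^n` representing `cos (t √a)`, the propagation over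
`k` time steps is the `k`-th Chebyshev polynomial of the first kind evaluated at the
one-step propagator: `C (k t) = T_k (C t)`. -/
theorem operator_cos_nat_mul_eq_chebyshev {𝔸 : Type*} [NormedRing 𝔸] [NormedAlgebra ℝ 𝔸]
    [CompleteSpace 𝔸] (a : 𝔸) (C : ℝ → 𝔸)
    (hC : ∀ t : ℝ, C t =
      ∑' n : ℕ, (((-1 : ℝ) ^ n * t ^ (2 * n) / (Nat.factorial (2 * n) : ℝ)) • a ^ n)) :
    ∀ (k : ℕ) (t : ℝ), C (k * t) = aeval (C t) (T ℝ (k : ℤ)) := by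
  obtain rfl : C = wavePropagator a := funext hC
  intro k t
  exact mod_cast operator_cos_nat_mul_eq_chebyshev_general a (k : ℤ) t
end
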